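/- Let d be a positive integer, let m_1,…,m_d and u_1,…,u_{d−1} be non-negative integers, and set s := (m_1+2, {1}_{u_1}, m_2+2, {1}_{u_2}, …, m_{d−1}+2, {1}_{u_{d−1}}, m_d+2), a tuple of length ‖s‖ := d + u_1 + … + u_{d−1} with weight |s| := s_1 + … + s_{‖s‖}. Let a, p ∈ ℝ with p ≠ 1 and |a| ≤ min(1, 2/p − 1). Then Li*_s({1}_{‖s‖−1}, a) = Li*_{{1}_{|s|}}( ⊔_{i=1}^{d−1}{1−p, {1}_{m_i}, 1/(1−p), {1}_{u_i}}, 1−p, {1}_{m_d}, 1 + ap/(1−p) ) − Li*_{{1}_{|s|}}( ⊔_{i=1}^{d−1}{1−p, {1}_{m_i}, 1/(1−p), {1}_{u_i}}, 1−p, {1}_{m_d+1} ). -/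

import Mathlib

/-- One-dimensional polylogarithm `Li_s(x) = ∑_{n≥1} x^n/n^s`. -/
noncomputable def Li (s : ℕ) (x : ℝ) : ℝ := ∑' n : ℕ, x ^ (n + 1) / (n + 1 : ℝ) ^ s

/-- Multiple polylogarithm
`Li*_{s₁,…,s_d}(x₁,…,x_d) = ∑_{n₁ ≥ ⋯ ≥ n_d ≥ 1} ∏ᵢ xᵢ^{nᵢ}/nᵢ^{sᵢ}`. -/
noncomputable def LiStar (s : List ℕ) (x : List ℝ) : ℝ :=
  ∑' m : {m : Fin s.length → ℕ // (∀ i j : Fin s.length, i ≤ j → m j ≤ m i) ∧ ∀ i, 1 ≤ m i},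
    ∏ i : Fin s.length, x.getD (i : ℕ) 0 ^ m.1 i / (m.1 i : ℝ) ^ s.get i

/-- The exponent tuple `s = (m₁+2, {1}_{u₁}, …, m_d+2, {1}_{u_d}, m_{d+1}+2)`
(here `d+1` plays the role of the paper's `d ≥ 1`). -/
def sTup (d : ℕ) (m : Fin (d + 1) → ℕ) (u : Fin d → ℕ) : List ℕ :=
  (List.ofFn fun i : Fin d => (m i.castSucc + 2) :: List.replicate (u i) 1).flatten ++
    [m (Fin.last d) + 2]

/-- The argument prefix `⊔_{i=1}^{d}{1−p, {1}_{mᵢ}, 1/(1−p), {1}_{uᵢ}}`. -/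
noncomputable def xPre (d : ℕ) (m : Fin (d + 1) → ℕ) (u : Fin d → ℕ) (p : ℝ) : List ℝ :=
  (List.ofFn fun i : Fin d =>
    (1 - p) :: (List.replicate (m i.castSucc) (1 : ℝ) ++
      (1 / (1 - p)) :: List.replicate (u i) (1 : ℝ))).flatten

/-!
Summing out the indices of `LiStar` from the largest to the smallest turns it into an iterated
tail sum. Attach to a sequence `f` the power series `Φ_f(z) = ∑_{n ≥ 1} f n * z ^ n / n`. A letter
with exponent `1` replaces `f` by the coefficients of the divided difference
`(Φ_f(z) - Φ_f(y)) / (z - y)`, where `y` is the product of the arguments read so far, and each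
further unit in the exponent of a letter is a divided difference at `0`. The affine map
`φ(a) = 1 - p + p * a` sends `0` to `1 - p` and `1` to `1`, so the letters on the left-hand side
(divided differences at `0` and `1`) correspond one by one to those on the right-hand side (at
`1 - p` and `1`). The relation `Φ_g(a) = Φ_f(φ(a)) - Φ_f(φ(0))` holds for `f = g = 1`, because then
`Φ(z) = -log (1 - z)`, and it survives each pair of corresponding divided differences at `y` and
`φ(y)`: these multiply the derivative of `Φ_f ∘ φ` and that of `Φ_g` by the same factor, and the
relation follows by integrating from `0`.
-/

namespace LiStar

open Asymptotics Filter

section TailSum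

variable {y w : ℝ} {f t : ℕ → ℝ}

/-- The geometrically weighted tail `∑_{k ≥ n} y ^ (k - n) * f k` of a sequence. -/
noncomputable def tailSum (y : ℝ) (f : ℕ → ℝ) (n : ℕ) : ℝ :=
  ∑' j : ℕ, y ^ j * f (n + j)

/-- The two regimes in which `tailSum y f` converges and is `O(1/n)`: geometric decay of the
weights with `f = O(1/n)`, or bounded weights with `f = O(1/n²)`. -/
def HasTailDecay (y : ℝ) (f : ℕ → ℝ) : Prop :=
  |y| < 1 ∧ f =O[atTop] (fun n => (n : ℝ)⁻¹) ∨
    |y| ≤ 1 ∧ f =O[atTop] (fun n => ((n : ℝ) ^ 2)⁻¹)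

lemma tailSum_pow_mul (y w : ℝ) (f : ℕ → ℝ) (n : ℕ) :
    tailSum y (fun k => w ^ k * f k) n = w ^ n * tailSum (y * w) f n := by
  simp only [tailSum, ← tsum_mul_left]
  exact tsum_congr fun j => by ring

lemma tailSum_eq_add (h : ∀ n, Summable fun j => y ^ j * f (n + j)) (n : ℕ) :
    tailSum y f n = f n + y * tailSum y f (n + 1) := by
  unfold tailSum
  rw [(h n).tsum_eq_zero_add, ← tsum_mul_left, pow_zero, one_mul, add_zero]
  congr 1
  refine tsum_congr fun j => ?_
  rw [pow_succ', mul_assoc, add_right_comm, add_assoc]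

lemma isBigO_one_of_isBigO_inv (h : f =O[atTop] fun n => (n : ℝ)⁻¹) :
    f =O[atTop] fun _ => (1 : ℝ) :=
  h.trans ((tendsto_inv_atTop_nhds_zero_nat (𝕜 := ℝ)).isBigO_one ℝ)

lemma isBigO_comp_add_left {g : ℕ → ℝ} (h : f =O[atTop] g) (n : ℕ) :
    (fun j => f (n + j)) =O[atTop] fun j => g (n + j) :=
  h.comp_tendsto (tendsto_atTop_mono (Nat.le_add_left · n) tendsto_id)

lemma summable_inv_sq_tail (n : ℕ) : Summable fun j : ℕ => (((n + j : ℕ) : ℝ) ^ 2)⁻¹ :=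
  (Real.summable_nat_pow_inv.2 one_lt_two).comp_injective (add_right_injective n)

lemma tsum_inv_sq_tail_le {n : ℕ} (hn : 0 < n) :
    ∑' j : ℕ, (((n + j : ℕ) : ℝ) ^ 2)⁻¹ ≤ 2 * (n : ℝ)⁻¹ := by
  refine Real.tsum_le_of_sum_range_le (fun j => by positivity) fun N => ?_
  obtain ⟨k, rfl⟩ : ∃ k, n = k + 1 := ⟨n - 1, by omega⟩
  have hIoo : ∑ j ∈ Finset.range N, (((k + 1 + j : ℕ) : ℝ) ^ 2)⁻¹ =
      ∑ i ∈ Finset.Ioo k (k + 1 + N), ((i : ℝ) ^ 2)⁻¹ := by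
    rw [← Finset.Ico_add_one_left_eq_Ioo, Finset.sum_Ico_eq_sum_range, Nat.add_sub_cancel_left]
  rw [hIoo, ← div_eq_mul_inv, Nat.cast_succ]
  exact sum_Ioo_inv_sq_le k _

namespace HasTailDecay

lemma abs (h : HasTailDecay y f) : HasTailDecay |y| fun n => |f n| := by
  simpa only [HasTailDecay, abs_abs, isBigO_abs_left] using h

lemma summable (h : HasTailDecay y f) (n : ℕ) : Summable fun j => y ^ j * f (n + j) := by
  rcases h with ⟨hy, hf⟩ | ⟨hy, hf⟩
  · refine summable_of_isBigO_nat (summable_geometric_of_abs_lt_one hy) ?_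
    simpa only [mul_one] using
      (isBigO_refl (y ^ ·) atTop).mul (isBigO_comp_add_left (isBigO_one_of_isBigO_inv hf) n)
  · refine summable_of_isBigO_nat (summable_inv_sq_tail n) ?_
    have hpow : (y ^ ·) =O[atTop] fun _ : ℕ => (1 : ℝ) :=
      .of_bound 1 (.of_forall fun j => by
        simpa only [norm_pow, norm_one, mul_one] using pow_le_one₀ (norm_nonneg y) hy)
    simpa only [one_mul] using hpow.mul (isBigO_comp_add_left hf n)

lemma tailSum_isBigO (h : HasTailDecay y f) : tailSum y f =O[atTop] fun n => (n : ℝ)⁻¹ := by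
  rcases h with ⟨hy, hf⟩ | ⟨hy, hf⟩ <;> obtain ⟨C, hC, hf⟩ := hf.exists_pos
  · refine .of_bound (C * (1 - |y|)⁻¹) ?_
    filter_upwards [eventually_forall_ge_atTop.2 hf.bound, eventually_gt_atTop 0] with n hfn hn
    have hgeom := (hasSum_geometric_of_lt_one (abs_nonneg y) hy).mul_left (C * (n : ℝ)⁻¹)
    calc ‖tailSum y f n‖ ≤ C * (n : ℝ)⁻¹ * (1 - |y|)⁻¹ := by
          refine tsum_of_norm_bounded hgeom fun j => ?_
          have hfj := hfn (n + j) (Nat.le_add_right n j)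
          rw [norm_inv, RCLike.norm_natCast] at hfj
          rw [norm_mul, norm_pow, mul_comm, Real.norm_eq_abs y]
          gcongr
          refine hfj.trans ?_
          gcongr
          exact Nat.le_add_right n j
      _ = C * (1 - |y|)⁻¹ * ‖(n : ℝ)⁻¹‖ := by
          rw [norm_inv, RCLike.norm_natCast]
          ring
  · refine .of_bound (C * 2) ?_
    filter_upwards [eventually_forall_ge_atTop.2 hf.bound, eventually_gt_atTop 0] with n hfn hn
    calc ‖tailSum y f n‖ ≤ C * ∑' j : ℕ, (((n + j : ℕ) : ℝ) ^ 2)⁻¹ := by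
          refine tsum_of_norm_bounded ((summable_inv_sq_tail n).hasSum.mul_left C) fun j => ?_
          have hfj := hfn (n + j) (Nat.le_add_right n j)
          rw [norm_inv, norm_pow, RCLike.norm_natCast] at hfj
          rw [norm_mul, norm_pow]
          exact (mul_le_of_le_one_left (norm_nonneg _) (pow_le_one₀ (norm_nonneg y) hy)).trans hfj
      _ ≤ C * (2 * (n : ℝ)⁻¹) := by
          gcongr
          exact tsum_inv_sq_tail_le hn
      _ = C * 2 * ‖(n : ℝ)⁻¹‖ := by rw [norm_inv, RCLike.norm_natCast, mul_assoc]

lemma summable_of_isBigO (h : HasTailDecay w f) (ht : t =O[atTop] fun n => w ^ n * f n) :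
    Summable t :=
  summable_of_isBigO_nat (by simpa only [zero_add] using h.summable 0) ht

lemma tailSum_one_isBigO (h : HasTailDecay w f) (ht : t =O[atTop] fun n => w ^ n * f n) :
    tailSum 1 t =O[atTop] fun n => w ^ n * (n : ℝ)⁻¹ := by
  have hdom : tailSum 1 t =O[atTop] fun n => |w| ^ n * tailSum |w| (fun k => |f k|) n := by
    obtain ⟨C, hC, ht⟩ := ht.exists_pos
    refine .of_bound C ?_
    filter_upwards [eventually_forall_ge_atTop.2 ht.bound] with n htn
    refine (tsum_of_norm_bounded
      (((h.abs.summable n).hasSum.mul_left (|w| ^ n)).mul_left C) fun j => ?_).trans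
      (by gcongr; exact le_abs_self _)
    rw [one_pow, one_mul]
    have htj := htn (n + j) (Nat.le_add_right n j)
    rwa [Real.norm_eq_abs (_ * _), abs_mul, abs_pow, pow_add, mul_assoc] at htj
  refine hdom.trans (((isBigO_refl _ _).mul h.abs.tailSum_isBigO).trans ?_)
  exact .of_bound 1 (.of_forall fun n => by simp)

end HasTailDecay

end TailSum

section IteratedSum

/-- Weakly decreasing `k`-tuples of positive integers, the index set of `LiStar`. -/
abbrev DescTuple (k : ℕ) : Type :=
  {m : Fin k → ℕ // (∀ i j : Fin k, i ≤ j → m j ≤ m i) ∧ ∀ i, 1 ≤ m i}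

namespace DescTuple

/-- The largest entry of a tuple, with the value `1` for the empty tuple: the least value allowed
for a new first entry. -/
def head : {k : ℕ} → DescTuple k → ℕ
  | 0, _ => 1
  | _ + 1, m => m.1 0

lemma head_pos : ∀ {k : ℕ} (m : DescTuple k), 1 ≤ m.head
  | 0, _ => le_rfl
  | _ + 1, m => m.2.2 0

lemma le_head : ∀ {k : ℕ} (m : DescTuple k) (i : Fin k), m.1 i ≤ m.head
  | 0, _, i => i.elim0
  | _ + 1, m, i => m.2.1 0 i (Fin.zero_le i)

/-- The tuple without its first entry. -/
def tail {k : ℕ} (m : DescTuple (k + 1)) : DescTuple k :=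
  ⟨Fin.tail m.1, fun _ _ h => m.2.1 _ _ (Fin.succ_le_succ_iff.2 h), fun _ => m.2.2 _⟩

lemma head_tail_le : ∀ {k : ℕ} (m : DescTuple (k + 1)), m.tail.head ≤ m.head
  | 0, m => m.2.2 0
  | _ + 1, m => m.2.1 0 1 (Fin.zero_le _)

/-- The tuple with a new first entry exceeding its head by `j`. -/
def cons {k : ℕ} (m : DescTuple k) (j : ℕ) : DescTuple (k + 1) :=
  ⟨Fin.cons (m.head + j) m.1, by
    refine ⟨fun i i' h => ?_, Fin.cases (m.head_pos.trans (Nat.le_add_right _ _)) m.2.2⟩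
    cases i using Fin.cases <;> cases i' using Fin.cases
    case zero.zero => exact le_rfl
    case zero.succ i' => exact (m.le_head i').trans (Nat.le_add_right _ _)
    case succ.zero i => exact absurd h (by simp)
    case succ.succ i i' => exact m.2.1 i i' (Fin.succ_le_succ_iff.1 h)⟩

/-- A decreasing tuple is its tail together with the excess of its first entry. -/
def consEquiv (k : ℕ) : DescTuple k × ℕ ≃ DescTuple (k + 1) where
  toFun q := q.1.cons q.2
  invFun m := (m.tail, m.head - m.tail.head)
  left_inv q := Prod.ext rfl (Nat.add_sub_cancel_left q.1.head q.2)
  right_inv m := Subtype.ext <| by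
    simp only [cons, Nat.add_sub_cancel' m.head_tail_le]
    exact Fin.cons_self_tail m.1

instance : Unique (DescTuple 0) where
  default := ⟨Fin.elim0, (Fin.elim0 ·), (Fin.elim0 ·)⟩
  uniq _ := Subsingleton.elim _ _

end DescTuple

/-- The summand of `LiStar s x`. -/
noncomputable def monomial (s : List ℕ) (x : List ℝ) (m : DescTuple s.length) : ℝ :=
  ∏ i : Fin s.length, x.getD (i : ℕ) 0 ^ m.1 i / (m.1 i : ℝ) ^ s.get i

/-- The summand of `LiStar s x` with the largest index weighted by `F`. -/
noncomputable def weight (s : List ℕ) (x : List ℝ) (F : ℕ → ℝ) (m : DescTuple s.length) : ℝ :=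
  F m.head * monomial s x m

/-- The summand contributed by one letter `(k, y)`, with `F` carrying the indices already
summed out. -/
noncomputable def term (c : ℕ × ℝ) (F : ℕ → ℝ) (n : ℕ) : ℝ :=
  F n * (c.2 ^ n / (n : ℝ) ^ c.1)

/-- Summing out the index of the letters of `l` from left to right, i.e. from the largest index
to the smallest. -/
noncomputable def iterSum (l : List (ℕ × ℝ)) (F : ℕ → ℝ) : ℕ → ℝ :=
  l.foldl (fun G c => tailSum 1 (term c G)) F

variable {c : ℕ × ℝ} {l : List (ℕ × ℝ)} {F : ℕ → ℝ} {z : ℝ}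

lemma hasSum_weight_nil (F : ℕ → ℝ) : HasSum (weight [] [] F) (F 1) := by
  have h : HasSum (weight [] [] F) (weight [] [] F (default : DescTuple 0)) :=
    hasSum_unique (β := DescTuple 0) _
  rwa [show weight [] [] F (default : DescTuple 0) = F 1 from mul_one _] at h

lemma weight_cons (k : ℕ) (y : ℝ) (s : List ℕ) (x : List ℝ) (F : ℕ → ℝ)
    (m : DescTuple s.length) (j : ℕ) :
    weight (k :: s) (y :: x) F (m.cons j) = term (k, y) F (m.head + j) * monomial s x m := by
  have hprod : monomial (k :: s) (y :: x) (m.cons j) =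
      y ^ (m.head + j) / ((m.head + j : ℕ) : ℝ) ^ k * monomial s x m :=
    Fin.prod_univ_succ (n := s.length) _
  rw [weight, hprod, ← mul_assoc]
  rfl

lemma tsum_weight_cons (k : ℕ) (y : ℝ) (s : List ℕ) (x : List ℝ) (F : ℕ → ℝ)
    (m : DescTuple s.length) :
    ∑' j, weight (k :: s) (y :: x) F (m.cons j) = weight s x (tailSum 1 (term (k, y) F)) m := by
  simp only [weight_cons, tsum_mul_right]
  simp only [weight, tailSum, one_pow, one_mul]

lemma tsum_weight_eq_iterSum (h : Summable (weight (l.map Prod.fst) (l.map Prod.snd) F)) :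
    ∑' m, weight (l.map Prod.fst) (l.map Prod.snd) F m = iterSum l F 1 := by
  induction l generalizing F with
  | nil =>
    exact (hasSum_weight_nil F).tsum_eq
  | cons c l ih =>
    let e := DescTuple.consEquiv (l.map Prod.fst).length
    have h' := e.summable_iff.2 h
    have hinner := tsum_weight_cons c.1 c.2 (l.map Prod.fst) (l.map Prod.snd) F
    have htail : Summable (weight (l.map Prod.fst) (l.map Prod.snd) (tailSum 1 (term c F))) :=
      h'.prod.congr hinner
    calc ∑' m, weight ((c :: l).map Prod.fst) ((c :: l).map Prod.snd) F m
        = ∑' m, ∑' j, weight ((c :: l).map Prod.fst) ((c :: l).map Prod.snd) F (e (m, j)) :=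
          (e.tsum_eq _).symm.trans h'.tsum_prod
      _ = iterSum l (tailSum 1 (term c F)) 1 := (tsum_congr hinner).trans (ih htail)

lemma eq_iterSum
    (h : Summable (weight (l.map Prod.fst) (l.map Prod.snd) fun _ => 1)) :
    LiStar (l.map Prod.fst) (l.map Prod.snd) = iterSum l (fun _ => 1) 1 :=
  (tsum_congr fun _ => (one_mul _).symm).trans (tsum_weight_eq_iterSum h)

lemma summable_weight_cons {k : ℕ} {y : ℝ} {s : List ℕ} {x : List ℝ}
    (hterm : Summable (term (k, y) F))
    (h : Summable (weight s x (tailSum 1 fun n => |term (k, y) F n|))) :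
    Summable (weight (k :: s) (y :: x) F) := by
  refine (DescTuple.consEquiv s.length).summable_iff.1 (Summable.of_abs ?_)
  have habs (q : DescTuple s.length × ℕ) :
      |weight (k :: s) (y :: x) F (q.1.cons q.2)| =
        |term (k, y) F (q.1.head + q.2)| * |monomial s x q.1| := by
    rw [weight_cons, abs_mul]
  refine (summable_prod_of_nonneg fun q => abs_nonneg _).2 ⟨fun m => ?_, h.abs.congr fun m => ?_⟩
  · have hshift : Summable fun j => |term (k, y) F (m.head + j)| :=
      hterm.abs.comp_injective (add_right_injective m.head)
    exact (hshift.mul_right |monomial s x m|).congr fun j => (habs (m, j)).symm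
  · have hnonneg : 0 ≤ ∑' j, |term (k, y) F (m.head + j)| := tsum_nonneg fun j => abs_nonneg _
    refine Eq.trans ?_ (tsum_congr fun j => habs (m, j)).symm
    simp only [tsum_mul_right, weight, tailSum, one_pow, one_mul, abs_mul, abs_of_nonneg hnonneg]

/-- The partial products of the arguments of `l`, starting from `z`, all lie in `[-1, 1]`, and
all exponents are positive. -/
def Admissible : ℝ → List (ℕ × ℝ) → Prop
  | _, [] => True
  | z, c :: l => 1 ≤ c.1 ∧ |z * c.2| ≤ 1 ∧ Admissible (z * c.2) l

lemma admissible_append {l₁ l₂ : List (ℕ × ℝ)} (h₁ : Admissible z l₁)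
    (h₂ : Admissible (z * (l₁.map Prod.snd).prod) l₂) : Admissible z (l₁ ++ l₂) := by
  induction l₁ generalizing z with
  | nil => simpa using h₂
  | cons c l₁ ih =>
    obtain ⟨hk, hz, h₁⟩ := h₁
    exact ⟨hk, hz, ih h₁ (by simpa [mul_assoc] using h₂)⟩

lemma summable_weight_of_isBigO (hl : Admissible z l)
    (hF : F =O[atTop] fun n => z ^ n * (n : ℝ)⁻¹) :
    Summable (weight (l.map Prod.fst) (l.map Prod.snd) F) := by
  induction l generalizing z F with
  | nil =>
    exact (hasSum_weight_nil F).summable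
  | cons c l ih =>
    obtain ⟨hk, hz, hl⟩ := hl
    have hdecay : HasTailDecay (z * c.2) fun n => ((n : ℝ) ^ 2)⁻¹ := .inr ⟨hz, isBigO_refl _ _⟩
    have hterm : term c F =O[atTop] fun n => (z * c.2) ^ n * ((n : ℝ) ^ 2)⁻¹ := by
      refine (hF.mul (isBigO_refl (fun n : ℕ => c.2 ^ n / (n : ℝ) ^ c.1) _)).trans ?_
      refine .of_bound 1 ?_
      filter_upwards [eventually_ge_atTop 1] with n hn
      have hn' : (1 : ℝ) ≤ n := mod_cast hn
      rw [mul_pow, one_mul, div_eq_mul_inv, mul_mul_mul_comm, norm_mul, norm_mul (_ * _)]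
      gcongr
      rw [← mul_inv, ← pow_succ', norm_inv, norm_inv, norm_pow, norm_pow, RCLike.norm_natCast]
      exact inv_anti₀ (by positivity) (pow_le_pow_right₀ hn' (by omega))
    exact summable_weight_cons (hdecay.summable_of_isBigO hterm)
      (ih hl (hdecay.tailSum_one_isBigO hterm.abs_left))

lemma summable_weight_one (hc : HasTailDecay c.2 fun n => ((n : ℝ) ^ c.1)⁻¹)
    (hl : Admissible c.2 l) :
    Summable (weight ((c :: l).map Prod.fst) ((c :: l).map Prod.snd) fun _ => 1) := by
  have hterm : term c (fun _ => 1) =O[atTop] fun n => c.2 ^ n * ((n : ℝ) ^ c.1)⁻¹ :=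
    .of_bound' (.of_forall fun n => by rw [term, one_mul, div_eq_mul_inv])
  exact summable_weight_cons (hc.summable_of_isBigO hterm)
    (summable_weight_of_isBigO hl (hc.tailSum_one_isBigO hterm.abs_left))

lemma eq_iterSum_of_admissible (hl : Admissible 1 l)
    (hhead : ∀ c ∈ l.head?, HasTailDecay c.2 fun n => ((n : ℝ) ^ c.1)⁻¹) :
    LiStar (l.map Prod.fst) (l.map Prod.snd) = iterSum l (fun _ => 1) 1 := by
  refine eq_iterSum ?_
  cases l with
  | nil => exact (hasSum_weight_nil _).summable
  | cons c l => exact summable_weight_one (hhead c rfl) (by simpa using hl.2.2)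

end IteratedSum

section GeneratingFunction

variable {y z : ℝ} {f : ℕ → ℝ}

/-- The generating function `∑_{n ≥ 1} f n * z ^ (n - 1)`. -/
noncomputable def gen (f : ℕ → ℝ) (z : ℝ) : ℝ :=
  ∑' n : ℕ, f (n + 1) * z ^ n

/-- The primitive `∑_{n ≥ 1} f n * z ^ n / n` of `gen f` vanishing at `0`. -/
noncomputable def prim (f : ℕ → ℝ) (z : ℝ) : ℝ :=
  ∑' n : ℕ, f (n + 1) / ((n + 1 : ℕ) : ℝ) * z ^ (n + 1)

/-- The coefficients of the divided difference `(prim f z - prim f y) / (z - y)`, as a power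
series in `z`; for `y = 0` this divides `f n` by `n`. -/
noncomputable def divDiff (y : ℝ) (f : ℕ → ℝ) : ℕ → ℝ :=
  tailSum y fun n => f n / (n : ℝ)

lemma divDiff_zero (f : ℕ → ℝ) (n : ℕ) : divDiff 0 f n = f n / (n : ℝ) :=
  (tsum_eq_single 0 fun j hj => by rw [zero_pow hj, zero_mul]).trans (by simp)

lemma prim_eq_mul_divDiff (f : ℕ → ℝ) (y : ℝ) : prim f y = y * divDiff y f 1 := by
  rw [prim, divDiff, tailSum, ← tsum_mul_left]
  refine tsum_congr fun n => ?_
  rw [add_comm 1 n, pow_succ']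
  ring

lemma prim_zero (f : ℕ → ℝ) : prim f 0 = 0 := by
  rw [prim_eq_mul_divDiff, zero_mul]

lemma isBigO_div_nat {g : ℕ → ℝ} (hf : f =O[atTop] g) :
    (fun n => f n / (n : ℝ)) =O[atTop] fun n => g n * (n : ℝ)⁻¹ := by
  simpa only [div_eq_mul_inv] using hf.mul (isBigO_refl (fun n : ℕ => (n : ℝ)⁻¹) atTop)

lemma hasTailDecay_div_of_abs_lt (hy : |y| < 1) (hf : f =O[atTop] fun _ => (1 : ℝ)) :
    HasTailDecay y fun n => f n / (n : ℝ) :=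
  .inl ⟨hy, by simpa only [one_mul] using isBigO_div_nat hf⟩

lemma hasTailDecay_div_of_abs_le (hy : |y| ≤ 1) (hf : f =O[atTop] fun n => (n : ℝ)⁻¹) :
    HasTailDecay y fun n => f n / (n : ℝ) :=
  .inr ⟨hy, by simpa only [sq, mul_inv] using isBigO_div_nat hf⟩

lemma summable_gen (hf : f =O[atTop] fun _ => (1 : ℝ)) (hz : |z| < 1) :
    Summable fun n => f (n + 1) * z ^ n := by
  refine summable_of_isBigO_nat (summable_geometric_of_abs_lt_one hz) ?_
  simpa only [one_mul, add_comm] using (isBigO_comp_add_left hf 1).mul (isBigO_refl (z ^ ·) atTop)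

lemma summable_prim (hf : f =O[atTop] fun _ => (1 : ℝ)) (hz : |z| < 1) :
    Summable fun n => f (n + 1) / ((n + 1 : ℕ) : ℝ) * z ^ (n + 1) := by
  refine (((hasTailDecay_div_of_abs_lt hz hf).summable 1).mul_left z).congr fun n => ?_
  rw [add_comm 1 n]
  ring

lemma hasDerivAt_prim (hf : f =O[atTop] fun _ => (1 : ℝ)) (hz : |z| < 1) :
    HasDerivAt (prim f) (gen f z) z := by
  obtain ⟨r, hzr, hr⟩ := exists_between hz
  have hr' : |r| < 1 := by rwa [abs_of_pos ((abs_nonneg z).trans_lt hzr)]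
  have hmem : z ∈ Metric.ball (0 : ℝ) r := by simpa using hzr
  refine hasDerivAt_tsum_of_isPreconnected (u := fun n => ‖f (n + 1) * r ^ n‖)
    (g := fun n z => f (n + 1) / ((n + 1 : ℕ) : ℝ) * z ^ (n + 1))
    (g' := fun n z => f (n + 1) * z ^ n) (summable_gen hf hr').norm Metric.isOpen_ball
    (convex_ball _ _).isPreconnected (fun n x _ => ?_) (fun n x hx => ?_) hmem
    (summable_prim hf hz) hmem
  · refine ((hasDerivAt_pow (n + 1) x).const_mul _).congr_deriv ?_
    rw [Nat.add_sub_cancel]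
    field_simp
  · rw [norm_mul, norm_mul, norm_pow, norm_pow]
    gcongr
    exact (mem_ball_zero_iff.1 hx).le.trans (le_abs_self r)

lemma continuousOn_prim (hf : f =O[atTop] fun n => (n : ℝ)⁻¹) :
    ContinuousOn (prim f) (Set.Icc (-1) 1) := by
  have hsum := (hasTailDecay_div_of_abs_le (y := 1) (by simp) hf).summable 1
  refine continuousOn_tsum (fun n => by fun_prop) hsum.norm fun n x hx => ?_
  rw [one_pow, one_mul, norm_mul, norm_pow, add_comm 1 n]
  exact mul_le_of_le_one_right (norm_nonneg _) (pow_le_one₀ (norm_nonneg x) (abs_le.2 hx))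

lemma divDiff_isBigO (h : HasTailDecay y fun n => f n / (n : ℝ)) :
    divDiff y f =O[atTop] fun n => (n : ℝ)⁻¹ :=
  h.tailSum_isBigO

lemma divDiff_eq_add (h : HasTailDecay y fun n => f n / (n : ℝ)) (n : ℕ) :
    divDiff y f n = f n / (n : ℝ) + y * divDiff y f (n + 1) :=
  tailSum_eq_add (f := fun n => f n / (n : ℝ)) h.summable n

lemma sub_mul_gen_divDiff (hf : f =O[atTop] fun _ => (1 : ℝ))
    (h : HasTailDecay y fun n => f n / (n : ℝ)) (hz : |z| < 1) :
    (z - y) * gen (divDiff y f) z = prim f z - prim f y := by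
  have hgen := summable_gen (isBigO_one_of_isBigO_inv (divDiff_isBigO h)) hz
  have hshift : Summable fun n => divDiff y f (n + 1 + 1) * z ^ (n + 1) :=
    (summable_nat_add_iff (f := fun n => divDiff y f (n + 1) * z ^ n) 1).2 hgen
  have hhead : gen (divDiff y f) z =
      divDiff y f 1 + ∑' n : ℕ, divDiff y f (n + 1 + 1) * z ^ (n + 1) := by
    rw [gen, hgen.tsum_eq_zero_add, zero_add, pow_zero, mul_one]
  have hmul : z * gen (divDiff y f) z =
      prim f z + y * ∑' n : ℕ, divDiff y f (n + 1 + 1) * z ^ (n + 1) := by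
    rw [gen, prim, ← tsum_mul_left, ← tsum_mul_left, ← (summable_prim hf hz).tsum_add
      (hshift.mul_left y)]
    refine tsum_congr fun n => ?_
    rw [divDiff_eq_add h (n + 1)]
    ring
  rw [prim_eq_mul_divDiff f y, sub_mul, hmul, hhead]
  ring

end GeneratingFunction

section AffineLink

variable {p a y : ℝ} {b f g : ℕ → ℝ}

/-- The interval on which both `a` and `1 - p + p * a` have absolute value less than `1`
(for `0 < p`). -/
def linkRegion (p : ℝ) : Set ℝ :=
  Set.Ioo (max (-1) (1 - 2 / p)) 1

/-- The sequences `f` and `g`, both `O(b)`, have primitives related by the affine map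
`a ↦ 1 - p + p * a`, which sends `0` to `1 - p` and `1` to `1`. -/
structure Linked (p : ℝ) (b f g : ℕ → ℝ) : Prop where
  isBigO_left : f =O[atTop] b
  isBigO_right : g =O[atTop] b
  prim_eq : ∀ a ∈ linkRegion p, prim g a = prim f (1 - p + p * a) - prim f (1 - p)

lemma abs_lt_one_of_mem_linkRegion (ha : a ∈ linkRegion p) : |a| < 1 :=
  abs_lt.2 ⟨(le_max_left _ _).trans_lt ha.1, ha.2⟩

lemma abs_affine_lt_one (hp : 0 < p) (ha : a ∈ linkRegion p) : |1 - p + p * a| < 1 := by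
  have hlower : p * (1 - 2 / p) < p * a := by
    gcongr
    exact (le_max_right _ _).trans_lt ha.1
  have hupper : p * a < p * 1 := by
    gcongr
    exact ha.2
  rw [mul_sub, mul_div_cancel₀ _ hp.ne'] at hlower
  exact abs_lt.2 ⟨by linarith, by linarith⟩

lemma abs_affine_le_one (hp : 0 < p) (ha : a ∈ Set.Icc (max (-1) (1 - 2 / p)) 1) :
    |1 - p + p * a| ≤ 1 := by
  have hlower : p * (1 - 2 / p) ≤ p * a := by
    gcongr
    exact (le_max_right _ _).trans ha.1
  have hupper : p * a ≤ p * 1 := by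
    gcongr
    exact ha.2
  rw [mul_sub, mul_div_cancel₀ _ hp.ne'] at hlower
  exact abs_le.2 ⟨by linarith, by linarith⟩

lemma zero_mem_linkRegion (hp : p ∈ Set.Ioo 0 2) : (0 : ℝ) ∈ linkRegion p := by
  have h : 1 < 2 / p := (one_lt_div hp.1).2 hp.2
  exact ⟨max_lt (by norm_num) (by linarith), one_pos⟩

lemma abs_one_sub_lt_one (hp : p ∈ Set.Ioo 0 2) : |1 - p| < 1 :=
  abs_lt.2 ⟨by linarith [hp.2], by linarith [hp.1]⟩

lemma closure_linkRegion (hp : p ∈ Set.Ioo 0 2) :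
    closure (linkRegion p) = Set.Icc (max (-1) (1 - 2 / p)) 1 :=
  closure_Ioo ((zero_mem_linkRegion hp).1.trans one_pos).ne

lemma prim_eq_of_gen_eq (hp : p ∈ Set.Ioo 0 2) (hf : f =O[atTop] fun _ => (1 : ℝ))
    (hg : g =O[atTop] fun _ => (1 : ℝ))
    (hgen : ∀ a ∈ linkRegion p, a ≠ y → gen g a = p * gen f (1 - p + p * a))
    (ha : a ∈ linkRegion p) : prim g a = prim f (1 - p + p * a) - prim f (1 - p) := by
  have hderiv (x : ℝ) (hx : x ∈ linkRegion p) :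
      HasDerivAt (fun x => prim g x - prim f (1 - p + p * x))
        (gen g x - gen f (1 - p + p * x) * p) x := by
    have hφ : HasDerivAt (fun x => 1 - p + p * x) p x := by
      simpa using ((hasDerivAt_id x).const_mul p).const_add (1 - p)
    exact (hasDerivAt_prim hg (abs_lt_one_of_mem_linkRegion hx)).sub
      (HasDerivAt.comp (h₂ := prim f) x (hasDerivAt_prim hf (abs_affine_lt_one hp.1 hx)) hφ)
  have hsub : Set.uIcc 0 a ⊆ linkRegion p :=
    Set.ordConnected_Ioo.uIcc_subset (zero_mem_linkRegion hp) ha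
  have hint := MeasureTheory.integral_eq_of_hasDerivAt_off_countable
    (fun x => prim g x - prim f (1 - p + p * x)) (fun _ => 0) (Set.countable_singleton y)
    (fun x hx => (hderiv x (hsub hx)).continuousAt.continuousWithinAt)
    (fun x hx => by
      have hx' := hsub (Set.Ioo_subset_Icc_self hx.1)
      simpa [hgen x hx' hx.2, mul_comm p] using hderiv x hx')
    intervalIntegrable_const
  simp only [intervalIntegral.integral_zero, prim_zero, mul_zero, add_zero] at hint
  linarith

namespace Linked

lemma of_inv (h : Linked p (fun n => (n : ℝ)⁻¹) f g) : Linked p (fun _ => 1) f g :=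
  ⟨isBigO_one_of_isBigO_inv h.isBigO_left, isBigO_one_of_isBigO_inv h.isBigO_right, h.prim_eq⟩

lemma prim_eq_of_mem_Icc (hp : p ∈ Set.Ioo 0 2) (h : Linked p (fun n => (n : ℝ)⁻¹) f g)
    (ha : a ∈ Set.Icc (max (-1) (1 - 2 / p)) 1) :
    prim g a = prim f (1 - p + p * a) - prim f (1 - p) := by
  refine Set.EqOn.of_subset_closure (s := linkRegion p) h.prim_eq ?_ ?_
    Set.Ioo_subset_Icc_self (closure_linkRegion hp).ge ha
  · exact (continuousOn_prim h.isBigO_right).mono (Set.Icc_subset_Icc (le_max_left _ _) le_rfl)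
  · exact ((continuousOn_prim h.isBigO_left).comp (by fun_prop)
      fun x hx => abs_le.1 (abs_affine_le_one hp.1 hx)).sub continuousOn_const

lemma divDiff (hp : p ∈ Set.Ioo 0 2) (h : Linked p (fun _ => 1) f g)
    (hf : HasTailDecay (1 - p + p * y) fun n => f n / (n : ℝ))
    (hg : HasTailDecay y fun n => g n / (n : ℝ))
    (hy : prim g y = prim f (1 - p + p * y) - prim f (1 - p)) :
    Linked p (fun n => (n : ℝ)⁻¹) (divDiff (1 - p + p * y) f) (divDiff y g) := by
  have hf' := divDiff_isBigO hf
  have hg' := divDiff_isBigO hg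
  refine ⟨hf', hg', fun a => prim_eq_of_gen_eq (y := y) hp (isBigO_one_of_isBigO_inv hf')
    (isBigO_one_of_isBigO_inv hg') fun a ha hay => mul_left_cancel₀ (sub_ne_zero.2 hay) ?_⟩
  calc (a - y) * gen (LiStar.divDiff y g) a
      = prim g a - prim g y := sub_mul_gen_divDiff h.isBigO_right hg
        (abs_lt_one_of_mem_linkRegion ha)
    _ = prim f (1 - p + p * a) - prim f (1 - p + p * y) := by
        rw [h.prim_eq a ha, hy, sub_sub_sub_cancel_right]
    _ = (1 - p + p * a - (1 - p + p * y)) *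
          gen (LiStar.divDiff (1 - p + p * y) f) (1 - p + p * a) :=
        (sub_mul_gen_divDiff h.isBigO_left hf (abs_affine_lt_one hp.1 ha)).symm
    _ = (a - y) * (p * gen (LiStar.divDiff (1 - p + p * y) f) (1 - p + p * a)) := by ring

lemma divDiff_zero (hp : p ∈ Set.Ioo 0 2) (h : Linked p (fun _ => 1) f g) :
    Linked p (fun n => (n : ℝ)⁻¹) (LiStar.divDiff (1 - p) f) (LiStar.divDiff 0 g) := by
  simpa only [mul_zero, add_zero] using h.divDiff hp (y := 0)
    (by simpa only [mul_zero, add_zero] using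
      hasTailDecay_div_of_abs_lt (abs_one_sub_lt_one hp) h.isBigO_left)
    (hasTailDecay_div_of_abs_lt (by simp) h.isBigO_right) (h.prim_eq 0 (zero_mem_linkRegion hp))

lemma divDiff_one (hp : p ∈ Set.Ioo 0 2) (h : Linked p (fun n => (n : ℝ)⁻¹) f g) :
    Linked p (fun n => (n : ℝ)⁻¹) (LiStar.divDiff 1 f) (LiStar.divDiff 1 g) := by
  have hmem : (1 : ℝ) ∈ Set.Icc (max (-1) (1 - 2 / p)) 1 :=
    ⟨((zero_mem_linkRegion hp).1.trans one_pos).le, le_rfl⟩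
  simpa only [mul_one, sub_add_cancel] using
    h.of_inv.divDiff hp (y := 1)
      (by simpa only [mul_one, sub_add_cancel] using
        hasTailDecay_div_of_abs_le (by simp) h.isBigO_left)
      (hasTailDecay_div_of_abs_le (by simp) h.isBigO_right) (h.prim_eq_of_mem_Icc hp hmem)

lemma iterate_divDiff_zero (hp : p ∈ Set.Ioo 0 2) (h : Linked p (fun _ => 1) f g) (k : ℕ) :
    Linked p (fun n => (n : ℝ)⁻¹) ((LiStar.divDiff (1 - p))^[k + 1] f)
      ((LiStar.divDiff 0)^[k + 1] g) := by
  induction k with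
  | zero => exact h.divDiff_zero hp
  | succ k ih =>
    rw [Function.iterate_succ_apply', Function.iterate_succ_apply' (LiStar.divDiff 0)]
    exact ih.of_inv.divDiff_zero hp

lemma iterate_divDiff_one (hp : p ∈ Set.Ioo 0 2) (h : Linked p (fun n => (n : ℝ)⁻¹) f g) (k : ℕ) :
    Linked p (fun n => (n : ℝ)⁻¹) ((LiStar.divDiff 1)^[k] f) ((LiStar.divDiff 1)^[k] g) := by
  induction k with
  | zero => exact h
  | succ k ih => simpa only [Function.iterate_succ_apply'] using ih.divDiff_one hp

end Linked

lemma prim_one (ha : |a| < 1) : prim (fun _ => 1) a = -Real.log (1 - a) := by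
  rw [← (Real.hasSum_pow_div_log_of_abs_lt_one ha).tsum_eq]
  refine tsum_congr fun n => ?_
  push_cast
  ring

lemma linked_one (hp : p ∈ Set.Ioo 0 2) :
    Linked p (fun _ => 1) (fun _ => 1) fun _ => 1 := by
  refine ⟨isBigO_refl _ _, isBigO_refl _ _, fun a ha => ?_⟩
  rw [prim_one (abs_lt_one_of_mem_linkRegion ha), prim_one (abs_affine_lt_one hp.1 ha),
    prim_one (abs_one_sub_lt_one hp), show 1 - (1 - p + p * a) = p * (1 - a) by ring,
    Real.log_mul hp.1.ne' (sub_pos.2 ha.2).ne', sub_sub_cancel]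
  ring

end AffineLink

section Words

variable {q x a : ℝ}

lemma term_succ (k : ℕ) (x : ℝ) (f : ℕ → ℝ) :
    term (k + 1, x) f = term (1, x) ((divDiff 0)^[k] f) := by
  induction k generalizing f with
  | zero => rfl
  | succ k ih =>
    rw [Function.iterate_succ_apply, ← ih]
    funext n
    simp only [term, divDiff_zero, pow_succ]
    ring

lemma tailSum_term_one (x y : ℝ) (f : ℕ → ℝ) :
    tailSum 1 (term (1, x) fun n => y ^ n * f n) = fun n => (y * x) ^ n * divDiff (y * x) f n := by
  have hterm : term (1, x) (fun n => y ^ n * f n) = fun n => (y * x) ^ n * (f n / (n : ℝ)) := by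
    funext n
    simp only [term, pow_one, mul_pow]
    ring
  funext n
  rw [hterm, tailSum_pow_mul, one_mul, divDiff]

lemma iterSum_append (l₁ l₂ : List (ℕ × ℝ)) (F : ℕ → ℝ) :
    iterSum (l₁ ++ l₂) F = iterSum l₂ (iterSum l₁ F) :=
  List.foldl_append

lemma iterSum_cons_one_replicate (x y : ℝ) (k : ℕ) (f : ℕ → ℝ) :
    iterSum ((1, x) :: List.replicate k (1, 1)) (fun n => y ^ n * f n) =
      fun n => (y * x) ^ n * (divDiff (y * x))^[k + 1] f n := by
  induction k generalizing x y f with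
  | zero => exact tailSum_term_one x y f
  | succ k ih =>
    change iterSum _ (tailSum 1 _) = _
    rw [tailSum_term_one, List.replicate_succ, ih, mul_one]
    rfl

lemma iterSum_cons_replicate (q : ℝ) (k : ℕ) (f : ℕ → ℝ) :
    iterSum ((1, q) :: List.replicate k (1, 1)) f = fun n => q ^ n * (divDiff q)^[k + 1] f n := by
  simpa only [one_pow, one_mul] using iterSum_cons_one_replicate q 1 k f

lemma tailSum_term_one_apply_one (x y : ℝ) (f : ℕ → ℝ) :
    tailSum 1 (term (1, x) fun n => y ^ n * f n) 1 = prim f (y * x) := by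
  simp only [tailSum_term_one, pow_one, prim_eq_mul_divDiff]

/-- The letters `(m + 2, {1}_u)` with arguments `1` of the left-hand word. -/
def leftBlock (b : ℕ × ℕ) : List (ℕ × ℝ) :=
  (b.1 + 2, 1) :: List.replicate b.2 (1, 1)

/-- The letters of the right-hand word, all of exponent `1`, with arguments
`q, {1}_m, 1 / q, {1}_u`. -/
noncomputable def rightBlock (q : ℝ) (b : ℕ × ℕ) : List (ℕ × ℝ) :=
  (1, q) :: (List.replicate b.1 (1, 1) ++ (1, 1 / q) :: List.replicate b.2 (1, 1))

/-- The effect of a block `(m, u)` on coefficient sequences: `m + 1` divided differences at `y`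
followed by `u + 1` divided differences at `1`. -/
noncomputable def blockDivDiff (y : ℝ) (f : ℕ → ℝ) (b : ℕ × ℕ) : ℕ → ℝ :=
  (divDiff 1)^[b.2 + 1] ((divDiff y)^[b.1 + 1] f)

lemma iterSum_leftBlock (b : ℕ × ℕ) (f : ℕ → ℝ) :
    iterSum (leftBlock b) f = blockDivDiff 0 f b := by
  have h := iterSum_cons_replicate 1 b.2 ((divDiff 0)^[b.1 + 1] f)
  simp only [one_pow, one_mul] at h
  exact (congrArg (fun G => iterSum (List.replicate b.2 (1, 1)) (tailSum 1 G))
    (term_succ (b.1 + 1) 1 f)).trans h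

lemma iterSum_rightBlock (hq : q ≠ 0) (b : ℕ × ℕ) (f : ℕ → ℝ) :
    iterSum (rightBlock q b) f = blockDivDiff q f b := by
  rw [rightBlock, ← List.cons_append, iterSum_append, iterSum_cons_replicate q b.1,
    iterSum_cons_one_replicate, mul_one_div_cancel hq]
  simp only [one_pow, one_mul]
  rfl

lemma iterSum_flatMap {ι : Type*} (block : ι → List (ℕ × ℝ)) (bl : List ι) (F : ℕ → ℝ) :
    iterSum (bl.flatMap block) F = bl.foldl (fun G b => iterSum (block b) G) F :=
  List.foldl_flatMap

lemma linked_foldl_blockDivDiff {p : ℝ} {f g : ℕ → ℝ} (hp : p ∈ Set.Ioo 0 2)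
    (h : Linked p (fun _ => 1) f g) (bl : List (ℕ × ℕ)) :
    Linked p (fun _ => 1) (bl.foldl (blockDivDiff (1 - p)) f) (bl.foldl (blockDivDiff 0) g) := by
  induction bl generalizing f g with
  | nil => exact h
  | cons b _ ih => exact ih ((h.iterate_divDiff_zero hp b.1).iterate_divDiff_one hp _).of_inv

lemma admissible_replicate {z : ℝ} (hz : |z| ≤ 1) (k : ℕ) :
    Admissible z (List.replicate k (1, 1)) := by
  induction k with
  | zero => trivial
  | succ k ih => exact ⟨le_rfl, by rwa [mul_one], by rwa [mul_one]⟩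

lemma admissible_leftBlock (b : ℕ × ℕ) : Admissible 1 (leftBlock b) :=
  ⟨by simp, by simp, admissible_replicate (by simp) _⟩

lemma admissible_rightBlock (hq0 : q ≠ 0) (hq : |q| ≤ 1) (b : ℕ × ℕ) :
    Admissible 1 (rightBlock q b) := by
  refine ⟨le_rfl, by rwa [one_mul], admissible_append
    (admissible_replicate (by rwa [one_mul]) _) ⟨le_rfl, ?_, ?_⟩⟩
  · simp [hq0]
  · exact admissible_replicate (by simp [hq0]) _

lemma admissible_flatMap_append {ι : Type*} {block : ι → List (ℕ × ℝ)} {l : List (ℕ × ℝ)}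
    (hblock : ∀ b, Admissible 1 (block b)) (hprod : ∀ b, ((block b).map Prod.snd).prod = 1)
    (bl : List ι) (hl : Admissible 1 l) : Admissible 1 (bl.flatMap block ++ l) := by
  induction bl with
  | nil => exact hl
  | cons b bl ih =>
    rw [List.flatMap_cons, List.append_assoc]
    exact admissible_append (hblock b) (by rwa [hprod, one_mul])

end Words

section Evaluation

variable {p q a x : ℝ}

/-- The word of exponents and arguments on the left-hand side, with blocks `bl = [(m_i, u_i)]`. -/
def leftWord (bl : List (ℕ × ℕ)) (M : ℕ) (a : ℝ) : List (ℕ × ℝ) :=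
  bl.flatMap leftBlock ++ [(M + 2, a)]

/-- The word of exponents and arguments of a term on the right-hand side, with `q = 1 - p`. -/
noncomputable def rightWord (q : ℝ) (bl : List (ℕ × ℕ)) (M : ℕ) (x : ℝ) : List (ℕ × ℝ) :=
  bl.flatMap (rightBlock q) ++ (1, q) :: (List.replicate M (1, 1) ++ [(1, x)])

lemma iterSum_leftWord (bl : List (ℕ × ℕ)) (M : ℕ) (a : ℝ) (f : ℕ → ℝ) :
    iterSum (leftWord bl M a) f 1 =
      prim ((divDiff 0)^[M + 1] (bl.foldl (blockDivDiff 0) f)) a := by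
  have h := tailSum_term_one_apply_one a 1 ((divDiff 0)^[M + 1] (bl.foldl (blockDivDiff 0) f))
  simp only [one_pow, one_mul, ← term_succ] at h
  rw [leftWord, iterSum_append, iterSum_flatMap]
  simp only [iterSum_leftBlock]
  exact h

lemma iterSum_rightWord (hq : q ≠ 0) (bl : List (ℕ × ℕ)) (M : ℕ) (x : ℝ) (f : ℕ → ℝ) :
    iterSum (rightWord q bl M x) f 1 =
      prim ((divDiff q)^[M + 1] (bl.foldl (blockDivDiff q) f)) (q * x) := by
  rw [rightWord, ← List.cons_append, iterSum_append, iterSum_append, iterSum_flatMap,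
    iterSum_cons_replicate]
  simp only [iterSum_rightBlock hq]
  exact tailSum_term_one_apply_one x q _

lemma admissible_leftWord (bl : List (ℕ × ℕ)) (M : ℕ) (ha : |a| ≤ 1) :
    Admissible 1 (leftWord bl M a) :=
  admissible_flatMap_append admissible_leftBlock (fun b => by simp [leftBlock]) bl
    ⟨by simp, by rwa [one_mul], trivial⟩

lemma admissible_rightWord (hq0 : q ≠ 0) (hq : |q| ≤ 1) (bl : List (ℕ × ℕ)) (M : ℕ)
    (hx : |q * x| ≤ 1) : Admissible 1 (rightWord q bl M x) := by
  refine admissible_flatMap_append (admissible_rightBlock hq0 hq)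
    (fun b => by simp [rightBlock, hq0]) bl ⟨le_rfl, by rwa [one_mul], ?_⟩
  refine admissible_append (admissible_replicate (by rwa [one_mul]) _) ⟨le_rfl, ?_, trivial⟩
  simpa using hx

lemma hasTailDecay_inv_pow_add_two (hx : |x| ≤ 1) (k : ℕ) :
    HasTailDecay x fun n => ((n : ℝ) ^ (k + 2))⁻¹ := by
  refine .inr ⟨hx, .of_bound 1 ?_⟩
  filter_upwards [eventually_ge_atTop 1] with n hn
  have hn' : (1 : ℝ) ≤ n := mod_cast hn
  rw [one_mul, norm_inv, norm_inv, norm_pow, norm_pow, RCLike.norm_natCast]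
  exact inv_anti₀ (by positivity) (pow_le_pow_right₀ hn' (by omega))

lemma leftWord_eq_prim (bl : List (ℕ × ℕ)) (M : ℕ) (ha : |a| ≤ 1) :
    LiStar ((leftWord bl M a).map Prod.fst) ((leftWord bl M a).map Prod.snd) =
      prim ((divDiff 0)^[M + 1] (bl.foldl (blockDivDiff 0) fun _ => 1)) a := by
  rw [eq_iterSum_of_admissible (admissible_leftWord bl M ha), iterSum_leftWord]
  rintro c hc
  cases bl <;> obtain rfl := Option.mem_some_iff.1 hc
  · exact hasTailDecay_inv_pow_add_two ha M
  · exact hasTailDecay_inv_pow_add_two (by simp) _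

lemma rightWord_eq_prim (hq0 : q ≠ 0) (hq : |q| < 1) (bl : List (ℕ × ℕ)) (M : ℕ)
    (hx : |q * x| ≤ 1) :
    LiStar ((rightWord q bl M x).map Prod.fst) ((rightWord q bl M x).map Prod.snd) =
      prim ((divDiff q)^[M + 1] (bl.foldl (blockDivDiff q) fun _ => 1)) (q * x) := by
  rw [eq_iterSum_of_admissible (admissible_rightWord hq0 hq.le bl M hx),
    iterSum_rightWord hq0]
  rintro c hc
  have hdecay : HasTailDecay q fun n => ((n : ℝ) ^ 1)⁻¹ :=
    .inl ⟨hq, by simpa only [pow_one] using isBigO_refl _ _⟩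
  cases bl <;> obtain rfl := Option.mem_some_iff.1 hc <;> exact hdecay

lemma map_snd_leftWord (bl : List (ℕ × ℕ)) (M : ℕ) (a : ℝ) :
    (leftWord bl M a).map Prod.snd =
      List.replicate ((leftWord bl M a).length - 1) 1 ++ [a] := by
  have h : (bl.flatMap leftBlock).map Prod.snd =
      List.replicate (bl.flatMap leftBlock).length 1 := by
    refine List.eq_replicate_iff.2 ⟨List.length_map _, fun c hc => ?_⟩
    simp only [leftBlock, List.map_flatMap, List.mem_flatMap, List.map_cons, List.map_replicate,
      List.mem_cons, List.mem_replicate] at hc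
    tauto
  simp [leftWord, h]

lemma map_fst_rightBlock (q : ℝ) (b : ℕ × ℕ) :
    (rightBlock q b).map Prod.fst = List.replicate ((leftBlock b).map Prod.fst).sum 1 := by
  refine List.eq_replicate_iff.2 ⟨?_, fun k hk => ?_⟩
  · simp only [rightBlock, leftBlock, List.map_cons, List.map_append, List.map_replicate,
      List.length_cons, List.length_append, List.length_replicate, List.sum_cons,
      List.sum_replicate, smul_eq_mul]
    omega
  · simp only [rightBlock, List.map_cons, List.map_append, List.map_replicate, List.mem_cons,
      List.mem_append, List.mem_replicate] at hk
    tauto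

lemma map_fst_rightWord (q : ℝ) (bl : List (ℕ × ℕ)) (M : ℕ) (x a : ℝ) :
    (rightWord q bl M x).map Prod.fst =
      List.replicate ((leftWord bl M a).map Prod.fst).sum 1 := by
  induction bl with
  | nil => simp [rightWord, leftWord, List.replicate_succ, ← List.replicate_succ' (n := M)]
  | cons b bl ih =>
    rw [rightWord, leftWord] at ih ⊢
    rw [List.flatMap_cons, List.flatMap_cons, List.append_assoc, List.append_assoc,
      List.map_append, List.map_append (l₁ := leftBlock b), List.sum_append, List.replicate_add,
      ih, map_fst_rightBlock]

/-- The pairs `(m_i, u_i)` indexing the blocks. -/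
def blocks (d : ℕ) (m : Fin (d + 1) → ℕ) (u : Fin d → ℕ) : List (ℕ × ℕ) :=
  List.ofFn fun i => (m i.castSucc, u i)

lemma map_fst_leftWord_blocks (d : ℕ) (m : Fin (d + 1) → ℕ) (u : Fin d → ℕ) (a : ℝ) :
    (leftWord (blocks d m u) (m (Fin.last d)) a).map Prod.fst = sTup d m u := by
  simp [leftWord, blocks, leftBlock, sTup, List.flatMap, List.map_ofFn, List.map_flatten,
    Function.comp_def]

lemma map_snd_rightWord_blocks (d : ℕ) (m : Fin (d + 1) → ℕ) (u : Fin d → ℕ) (p : ℝ) (M : ℕ)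
    (x : ℝ) :
    (rightWord (1 - p) (blocks d m u) M x).map Prod.snd =
      xPre d m u p ++ (1 - p) :: (List.replicate M 1 ++ [x]) := by
  simp [rightWord, blocks, rightBlock, xPre, List.flatMap, List.map_ofFn, List.map_flatten,
    Function.comp_def]

lemma sTup_eq_prim (d : ℕ) (m : Fin (d + 1) → ℕ) (u : Fin d → ℕ) (ha : |a| ≤ 1) :
    LiStar (sTup d m u) (List.replicate ((sTup d m u).length - 1) 1 ++ [a]) =
      prim ((divDiff 0)^[m (Fin.last d) + 1]
        ((blocks d m u).foldl (blockDivDiff 0) fun _ => 1)) a := by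
  rw [← leftWord_eq_prim _ _ ha, map_snd_leftWord, map_fst_leftWord_blocks,
    ← map_fst_leftWord_blocks d m u a, List.length_map]

lemma xPre_eq_prim (d : ℕ) (m : Fin (d + 1) → ℕ) (u : Fin d → ℕ) (hp : p ≠ 1)
    (hp02 : |1 - p| < 1) (hx : |(1 - p) * x| ≤ 1) :
    LiStar (List.replicate (sTup d m u).sum 1)
        (xPre d m u p ++ (1 - p) :: (List.replicate (m (Fin.last d)) 1 ++ [x])) =
      prim ((divDiff (1 - p))^[m (Fin.last d) + 1]
        ((blocks d m u).foldl (blockDivDiff (1 - p)) fun _ => 1)) ((1 - p) * x) := by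
  rw [← rightWord_eq_prim (sub_ne_zero.2 hp.symm) hp02 _ _ hx, map_snd_rightWord_blocks,
    map_fst_rightWord _ _ _ _ 0, map_fst_leftWord_blocks]

lemma eq_zero_of_getD_eq_zero {s : List ℕ} {x : List ℝ} (i : Fin s.length) (hi : x.getD i 0 = 0) :
    LiStar s x = 0 := by
  refine (tsum_congr fun m => Finset.prod_eq_zero (Finset.mem_univ i) ?_).trans tsum_zero
  rw [hi, zero_pow (Nat.one_le_iff_ne_zero.1 (m.2.2 i)), zero_div]

end Evaluation

section ParameterRange

variable {a p : ℝ}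

lemma eq_zero_or_mem_Ioo_of_abs_le (ha : |a| ≤ min 1 (2 / p - 1)) :
    a = 0 ∨ p ∈ Set.Ioo 0 2 := by
  refine or_iff_not_imp_left.2 fun ha0 => ?_
  have h : 1 < 2 / p := by linarith [abs_pos.2 ha0, ha.trans (min_le_right _ _)]
  have hp : 0 < p := (div_pos_iff_of_pos_left two_pos).1 (one_pos.trans h)
  exact ⟨hp, (one_lt_div hp).1 h⟩

lemma mem_Icc_of_abs_le (ha : |a| ≤ min 1 (2 / p - 1)) :
    a ∈ Set.Icc (max (-1) (1 - 2 / p)) 1 := by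
  obtain ⟨ha₁, ha₂⟩ := le_min_iff.1 ha
  obtain ⟨hlower, hupper⟩ := abs_le.1 ha₁
  exact ⟨max_le hlower (by linarith [neg_abs_le a]), hupper⟩

end ParameterRange

end LiStar

theorem stmt_12_general (d : ℕ) (m : Fin (d + 1) → ℕ) (u : Fin d → ℕ) (a p : ℝ)
    (hp : p ≠ 1) (hp02 : a = 0 ∨ p ∈ Set.Ioo 0 2) (ha : a ∈ Set.Icc (max (-1) (1 - 2 / p)) 1) :
    LiStar (sTup d m u) (List.replicate ((sTup d m u).length - 1) (1 : ℝ) ++ [a]) =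
      LiStar (List.replicate (sTup d m u).sum 1)
          (xPre d m u p ++
            (1 - p) :: (List.replicate (m (Fin.last d)) (1 : ℝ) ++ [1 + a * p / (1 - p)])) -
        LiStar (List.replicate (sTup d m u).sum 1)
          (xPre d m u p ++ (1 - p) :: List.replicate (m (Fin.last d) + 1) (1 : ℝ)) := by
  rcases hp02 with rfl | hp02
  · rw [zero_mul, zero_div, add_zero, List.replicate_succ', sub_self]
    exact LiStar.eq_zero_of_getD_eq_zero ⟨(sTup d m u).length - 1, by simp [sTup]⟩ (by simp)
  have hx : (1 - p) * (1 + a * p / (1 - p)) = 1 - p + p * a := by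
    rw [mul_add, mul_div_cancel₀ _ (sub_ne_zero.2 hp.symm), mul_one, mul_comm a]
  have hq := LiStar.abs_one_sub_lt_one hp02
  have ha' : |a| ≤ 1 := abs_le.2 ⟨(le_max_left _ _).trans ha.1, ha.2⟩
  have hlinked := (LiStar.linked_foldl_blockDivDiff hp02 (LiStar.linked_one hp02)
    (LiStar.blocks d m u)).iterate_divDiff_zero hp02 (m (Fin.last d))
  rw [List.replicate_succ', LiStar.sTup_eq_prim d m u ha',
    LiStar.xPre_eq_prim d m u hp hq (by rw [hx]; exact LiStar.abs_affine_le_one hp02.1 ha),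
    LiStar.xPre_eq_prim d m u hp hq (by rw [mul_one]; exact hq.le),
    hx, mul_one]
  exact hlinked.prim_eq_of_mem_Icc hp02 ha

/-- First theorem on polylogarithms (Theorem 3.1). -/
theorem stmt_12 (d : ℕ) (m : Fin (d + 1) → ℕ) (u : Fin d → ℕ) (a p : ℝ)
    (hp : p ≠ 1) (ha : |a| ≤ min 1 (2 / p - 1)) :
    LiStar (sTup d m u) (List.replicate ((sTup d m u).length - 1) (1 : ℝ) ++ [a]) =
      LiStar (List.replicate (sTup d m u).sum 1)
          (xPre d m u p ++
            (1 - p) :: (List.replicate (m (Fin.last d)) (1 : ℝ) ++ [1 + a * p / (1 - p)])) -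
        LiStar (List.replicate (sTup d m u).sum 1)
          (xPre d m u p ++ (1 - p) :: List.replicate (m (Fin.last d) + 1) (1 : ℝ)) :=
  stmt_12_general d m u a p hp (LiStar.eq_zero_or_mem_Ioo_of_abs_le ha)
    (LiStar.mem_Icc_of_abs_le ha)
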